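/- Let ψ : ℝ → ℂ be a 2π-periodic function satisfying the Lipschitz condition |ψ(u) − ψ(v)| ≤ C|u − v| for all u, v ∈ [−π, π], let φ(u) = ψ(u) sinh(u), and let f(x) = (2x/π) ∫_{−π}^{π} K₀(x cosh u) φ(u) cosh(u) du for x > 0. Then for every n ∈ ℕ, the transform aₙ = ∫₀^∞ (∫₀^y K_{in}(t)/(y² − t²)^{1/2} dt) f(y) dy satisfies aₙ = (π/ sinh(πn)) ∫_{−π}^{π} φ(u) sin(nu)/ sinh(u) du. -/

import Mathlib

/-!
The function `f` is a superposition, over `c = cosh u`, of the functions `y ↦ y K₀(c y)`. The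
transform integrates `f` against the Abel transform of `K_{in}`, and moving the Abel transform onto
`y K₀(c y)` gives `∫_t^∞ y K₀(c y) / √(y² - t²) dy = π / (2c) · e^{-c t}`: substituting
`y² = t² + s²`, and `s x = y sinh v` in `K₀(c y) = ∫₀^∞ e^{-c y cosh v} dv`, one gets a double
integral over `s, x > 0` that separates, after a change of order, into an exponential and a Cauchy
integral. So `aₙ` is a superposition of the values of the Laplace transform of `K_{in}` at `cosh u`,
that is, of `∫₀^∞ cos(n v) / (cosh u + cosh v) dv`.

Since `2 sinh u / (cosh u + cosh v) = ∫_{-u}^u dq / (1 + cosh (q + v))`, this cosine transform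
follows from the Fourier transform of `1 / (1 + cosh v)`, which the logistic substitution identifies
with the Beta integral `2 B(1 + iτ, 1 - iτ) = 2πτ / sinh (πτ)`. It equals
`π sin(n u) / (sinh u sinh(π n))`.
-/

open MeasureTheory Real

/-- The modified Bessel function of the second kind of purely imaginary order `iτ`,
`K_{iτ}(x) = ∫₀^∞ e^{−x cosh u} cos(τu) du` (real-valued). -/
noncomputable def besselKi (τ x : ℝ) : ℝ :=
  ∫ u in Set.Ioi (0 : ℝ), Real.exp (-x * Real.cosh u) * Real.cos (τ * u)

/-- The Lebedev kernel `Lₙ(y) = ∫₀^y K_{in}(t)/(y² − t²)^{1/2} dt`. -/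
noncomputable def lebedevL (n : ℕ) (y : ℝ) : ℝ :=
  ∫ t in (0 : ℝ)..y, besselKi n t / Real.sqrt (y ^ 2 - t ^ 2)

open Set

/-! ### The Abel transform -/

/-- The Abel transform `(A k)(y) = ∫₀^y k(t) / √(y² - t²) dt`, so that the Lebedev kernel is
`A K_{in}`. -/
noncomputable def abelTransform (k : ℝ → ℝ) (y : ℝ) : ℝ :=
  ∫ t in (0 : ℝ)..y, k t / √(y ^ 2 - t ^ 2)

theorem lebedevL_eq_abelTransform (n : ℕ) : lebedevL n = abelTransform (besselKi n) :=
  rfl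

/-- The formal adjoint `(A* w)(t) = ∫_t^∞ w(y) / √(y² - t²) dy` of the Abel transform on
`L²(0, ∞)`. -/
noncomputable def abelAdjoint (w : ℝ → ℝ) (t : ℝ) : ℝ :=
  ∫ y in Ioi t, w y / √(y ^ 2 - t ^ 2)

/-- The integrand of the Abel transform, set to zero outside `t < y` so that both variables range
over the fixed domain `(0, ∞)`. -/
noncomputable def abelIntegrand (k : ℝ → ℝ) (y t : ℝ) : ℝ :=
  (Iio y).indicator (fun t => k t / √(y ^ 2 - t ^ 2)) t

section Abel

variable {k w : ℝ → ℝ}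

theorem integral_abelIntegrand (k : ℝ → ℝ) {y : ℝ} (hy : 0 ≤ y) :
    ∫ t in Ioi 0, abelIntegrand k y t = abelTransform k y := by
  simp only [abelIntegrand]
  rw [setIntegral_indicator measurableSet_Iio, Ioi_inter_Iio, abelTransform,
    intervalIntegral.integral_of_le hy, integral_Ioc_eq_integral_Ioo]

theorem abelIntegrand_mul_eq_indicator (k w : ℝ → ℝ) (y t : ℝ) :
    abelIntegrand k y t * w y = (Ioi t).indicator (fun y => k t * (w y / √(y ^ 2 - t ^ 2))) y := by
  simp only [abelIntegrand, indicator, mem_Ioi, mem_Iio]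
  split_ifs <;> ring

theorem integral_abelIntegrand_mul (k w : ℝ → ℝ) {t : ℝ} (ht : 0 ≤ t) :
    ∫ y in Ioi 0, abelIntegrand k y t * w y = k t * abelAdjoint w t := by
  simp only [abelIntegrand_mul_eq_indicator]
  rw [setIntegral_indicator measurableSet_Ioi, inter_eq_right.2 (Ioi_subset_Ioi ht),
    integral_const_mul, abelAdjoint]

theorem integral_norm_abelIntegrand_mul (k : ℝ → ℝ) (hw : ∀ y, 0 < y → 0 ≤ w y) {t : ℝ}
    (ht : 0 ≤ t) :
    ∫ y in Ioi 0, ‖abelIntegrand k y t * w y‖ = ‖k t * abelAdjoint w t‖ := by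
  have h_adj : 0 ≤ abelAdjoint w t := setIntegral_nonneg measurableSet_Ioi fun y hy =>
    div_nonneg (hw y (ht.trans_lt hy)) (sqrt_nonneg _)
  rw [norm_mul, norm_of_nonneg h_adj, ← integral_abelIntegrand_mul (fun t => ‖k t‖) w ht]
  refine setIntegral_congr_fun measurableSet_Ioi fun y hy => ?_
  simp only [abelIntegrand, norm_mul, norm_indicator_eq_indicator_norm, norm_div,
    norm_of_nonneg (sqrt_nonneg _), norm_of_nonneg (hw y hy)]

theorem aestronglyMeasurable_abelIntegrand
    (hk : AEStronglyMeasurable k (volume.restrict (Ioi 0))) :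
    AEStronglyMeasurable (Function.uncurry (abelIntegrand k))
      ((volume.restrict (Ioi 0)).prod (volume.restrict (Ioi 0))) := by
  have h_eq : Function.uncurry (abelIntegrand k) = {p : ℝ × ℝ | p.2 < p.1}.indicator
      fun p => k p.2 / √(p.1 ^ 2 - p.2 ^ 2) := rfl
  have h_sqrt : Measurable fun p : ℝ × ℝ => √(p.1 ^ 2 - p.2 ^ 2) := by fun_prop
  rw [h_eq]
  exact (hk.comp_snd.div₀ h_sqrt.aestronglyMeasurable).indicator
    (measurableSet_lt measurable_snd measurable_fst)

theorem aestronglyMeasurable_abelTransform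
    (hk : AEStronglyMeasurable k (volume.restrict (Ioi 0))) :
    AEStronglyMeasurable (abelTransform k) (volume.restrict (Ioi 0)) := by
  refine (aestronglyMeasurable_abelIntegrand hk).integral_prod_right'.congr ?_
  filter_upwards [ae_restrict_mem measurableSet_Ioi] with y hy
  exact integral_abelIntegrand k (le_of_lt hy)

theorem integrable_abelIntegrand_mul (hk : AEStronglyMeasurable k (volume.restrict (Ioi 0)))
    (hw : ∀ y, 0 < y → 0 ≤ w y) (hw_meas : AEStronglyMeasurable w (volume.restrict (Ioi 0)))
    (hw_int : ∀ t, 0 < t → IntegrableOn (fun y => w y / √(y ^ 2 - t ^ 2)) (Ioi t))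
    (hkw : IntegrableOn (fun t => k t * abelAdjoint w t) (Ioi 0)) :
    Integrable (Function.uncurry fun y t => abelIntegrand k y t * w y)
      ((volume.restrict (Ioi 0)).prod (volume.restrict (Ioi 0))) := by
  refine (integrable_prod_iff'
    ((aestronglyMeasurable_abelIntegrand hk).mul hw_meas.comp_fst)).2 ⟨?_, ?_⟩
  · filter_upwards [ae_restrict_mem measurableSet_Ioi] with t ht
    change IntegrableOn (fun y => abelIntegrand k y t * w y) (Ioi 0)
    simp only [abelIntegrand_mul_eq_indicator]
    exact ((integrable_indicator_iff measurableSet_Ioi).2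
      ((hw_int t ht).const_mul (k t))).integrableOn
  · refine hkw.norm.congr ?_
    filter_upwards [ae_restrict_mem measurableSet_Ioi] with t ht
    exact (integral_norm_abelIntegrand_mul k hw (le_of_lt ht)).symm

theorem integrableOn_abelTransform_mul
    (h : Integrable (Function.uncurry fun y t => abelIntegrand k y t * w y)
      ((volume.restrict (Ioi 0)).prod (volume.restrict (Ioi 0)))) :
    IntegrableOn (fun y => abelTransform k y * w y) (Ioi 0) := by
  refine h.integral_prod_left.congr ?_
  filter_upwards [ae_restrict_mem measurableSet_Ioi] with y hy
  simp only [Function.uncurry, integral_mul_const, integral_abelIntegrand k (le_of_lt hy)]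

theorem integral_abelTransform_mul
    (h : Integrable (Function.uncurry fun y t => abelIntegrand k y t * w y)
      ((volume.restrict (Ioi 0)).prod (volume.restrict (Ioi 0)))) :
    ∫ y in Ioi 0, abelTransform k y * w y = ∫ t in Ioi 0, k t * abelAdjoint w t :=
  calc ∫ y in Ioi 0, abelTransform k y * w y
      = ∫ y in Ioi 0, ∫ t in Ioi 0, abelIntegrand k y t * w y :=
        setIntegral_congr_fun measurableSet_Ioi fun y hy => by
          simp only [integral_mul_const, integral_abelIntegrand k (le_of_lt hy)]
    _ = ∫ t in Ioi 0, ∫ y in Ioi 0, abelIntegrand k y t * w y := integral_integral_swap h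
    _ = ∫ t in Ioi 0, k t * abelAdjoint w t :=
        setIntegral_congr_fun measurableSet_Ioi fun _ ht =>
          integral_abelIntegrand_mul k w (le_of_lt ht)

theorem integral_norm_abelTransform_mul_le (hw : ∀ y, 0 < y → 0 ≤ w y)
    (h : Integrable (Function.uncurry fun y t => abelIntegrand k y t * w y)
      ((volume.restrict (Ioi 0)).prod (volume.restrict (Ioi 0)))) :
    ∫ y in Ioi 0, ‖abelTransform k y * w y‖ ≤ ∫ t in Ioi 0, ‖k t * abelAdjoint w t‖ :=
  calc ∫ y in Ioi 0, ‖abelTransform k y * w y‖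
      ≤ ∫ y in Ioi 0, ∫ t in Ioi 0, ‖abelIntegrand k y t * w y‖ :=
        setIntegral_mono_on (integrableOn_abelTransform_mul h).norm h.norm.integral_prod_left
          measurableSet_Ioi fun y hy => by
            rw [← integral_abelIntegrand k (le_of_lt hy), ← integral_mul_const]
            exact norm_integral_le_integral_norm _
    _ = ∫ t in Ioi 0, ∫ y in Ioi 0, ‖abelIntegrand k y t * w y‖ := integral_integral_swap h.norm
    _ = ∫ t in Ioi 0, ‖k t * abelAdjoint w t‖ :=
        setIntegral_congr_fun measurableSet_Ioi fun _ ht =>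
          integral_norm_abelIntegrand_mul k hw (le_of_lt ht)

end Abel

/-! ### The adjoint Abel transform of `y ↦ y K₀(c y)` -/

theorem lintegral_Ioi_eq_lintegral_comp_sqrt {b t : ℝ} (hb : 0 < b) (ht : 0 < t)
    (g : ℝ → ENNReal) :
    ∫⁻ y in Ioi t, g y =
      ∫⁻ s in Ioi 0, ENNReal.ofReal (b * s / √(t ^ 2 + b * s ^ 2)) * g √(t ^ 2 + b * s ^ 2) := by
  have h_image : (fun s => √(t ^ 2 + b * s ^ 2)) '' Ioi 0 = Ioi t := by
    ext y
    refine ⟨?_, fun hy => ⟨√((y ^ 2 - t ^ 2) / b), ?_, ?_⟩⟩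
    · rintro ⟨s, hs, rfl⟩
      exact lt_sqrt_of_sq_lt (lt_add_of_pos_right _ (mul_pos hb (pow_pos hs 2)))
    · exact sqrt_pos.2 (div_pos (sub_pos.2 (pow_lt_pow_left₀ hy ht.le two_ne_zero)) hb)
    · have h_sq : 0 ≤ (y ^ 2 - t ^ 2) / b :=
        div_nonneg (sub_nonneg.2 (pow_le_pow_left₀ ht.le (le_of_lt hy) 2)) hb.le
      simp only [sq_sqrt h_sq, mul_div_cancel₀ _ hb.ne', add_sub_cancel,
        sqrt_sq (ht.trans hy).le]
  have h_deriv : ∀ s ∈ Ioi (0 : ℝ), HasDerivWithinAt (fun s => √(t ^ 2 + b * s ^ 2))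
      (b * s / √(t ^ 2 + b * s ^ 2)) (Ioi 0) s := fun s _ => by
    have h_poly : HasDerivAt (fun s => t ^ 2 + b * s ^ 2) (b * (2 * s)) s := by
      simpa using ((hasDerivAt_pow 2 s).const_mul b).const_add (t ^ 2)
    refine ((h_poly.sqrt (by positivity)).congr_deriv ?_).hasDerivWithinAt
    field_simp
  have h_mono : MonotoneOn (fun s => √(t ^ 2 + b * s ^ 2)) (Ioi 0) := fun s hs s' _ hss' => by
    have : (0 : ℝ) ≤ s := le_of_lt hs
    dsimp only
    gcongr
  rw [← h_image, lintegral_image_eq_lintegral_deriv_mul_of_monotoneOn measurableSet_Ioi h_deriv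
    h_mono]

theorem lintegral_Ioi_eq_lintegral_comp_sinh {a : ℝ} (ha : 0 < a) (g : ℝ → ENNReal) :
    ∫⁻ x in Ioi 0, g x = ∫⁻ v in Ioi 0, ENNReal.ofReal (a * cosh v) * g (a * sinh v) := by
  have h_image : (fun v => a * sinh v) '' Ioi 0 = Ioi 0 := by
    ext x
    refine ⟨?_, fun hx => ⟨arsinh (x / a), arsinh_pos_iff.2 (div_pos hx ha), ?_⟩⟩
    · rintro ⟨v, hv, rfl⟩
      exact mul_pos ha (sinh_pos_iff.2 hv)
    · simp only [sinh_arsinh, mul_div_cancel₀ _ ha.ne']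
  conv_lhs => rw [← h_image]
  exact lintegral_image_eq_lintegral_deriv_mul_of_monotoneOn measurableSet_Ioi
    (fun v _ => ((hasDerivAt_sinh v).const_mul a).hasDerivWithinAt)
    ((sinh_strictMono.const_mul ha).monotone.monotoneOn _) g

theorem lintegral_Ioi_exp_neg_mul {c : ℝ} (hc : 0 < c) (t : ℝ) :
    ∫⁻ y in Ioi t, ENNReal.ofReal (exp (-c * y)) = ENNReal.ofReal (exp (-c * t) / c) := by
  rw [← ofReal_integral_eq_lintegral_ofReal (exp_neg_integrableOn_Ioi t hc)
    (ae_of_all _ fun _ => (exp_pos _).le), integral_exp_mul_Ioi (neg_lt_zero.2 hc), neg_div_neg_eq]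

theorem lintegral_Ioi_inv_one_add_sq :
    ∫⁻ x in Ioi (0 : ℝ), ENNReal.ofReal ((1 + x ^ 2)⁻¹) = ENNReal.ofReal (π / 2) := by
  rw [← ofReal_integral_eq_lintegral_ofReal integrable_inv_one_add_sq.integrableOn
    (ae_of_all _ fun x => by positivity)]
  simp

theorem lintegral_exp_neg_mul_sqrt {b c t : ℝ} (hb : 0 < b) (hc : 0 < c) (ht : 0 < t) :
    ∫⁻ s in Ioi 0, ENNReal.ofReal
        (s / √(t ^ 2 + b * s ^ 2) * exp (-c * √(t ^ 2 + b * s ^ 2))) =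
      ENNReal.ofReal (exp (-c * t) / c * b⁻¹) := by
  have h_scale : ∀ s ∈ Ioi (0 : ℝ),
      ENNReal.ofReal (s / √(t ^ 2 + b * s ^ 2) * exp (-c * √(t ^ 2 + b * s ^ 2))) =
        ENNReal.ofReal b⁻¹ * (ENNReal.ofReal (b * s / √(t ^ 2 + b * s ^ 2)) *
          ENNReal.ofReal (exp (-c * √(t ^ 2 + b * s ^ 2)))) := fun s hs => by
    have : 0 < s := hs
    rw [← ENNReal.ofReal_mul (by positivity), ← ENNReal.ofReal_mul (by positivity)]
    congr 1
    field_simp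
  rw [setLIntegral_congr_fun measurableSet_Ioi h_scale, lintegral_const_mul _ (by fun_prop),
    ← lintegral_Ioi_eq_lintegral_comp_sqrt hb ht fun y => ENNReal.ofReal (exp (-c * y)),
    lintegral_Ioi_exp_neg_mul hc, ← ENNReal.ofReal_mul (by positivity), mul_comm]

theorem besselKi_zero_eq (x : ℝ) : besselKi 0 x = ∫ v in Ioi 0, exp (-x * cosh v) := by
  simp only [besselKi, zero_mul, cos_zero, mul_one]

theorem besselKi_zero_nonneg (x : ℝ) : 0 ≤ besselKi 0 x := by
  rw [besselKi_zero_eq]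
  positivity

theorem measurable_besselKi (τ : ℝ) : Measurable (besselKi τ) := by
  have h_meas : Measurable (Function.uncurry fun x u : ℝ => exp (-x * cosh u) * cos (τ * u)) := by
    fun_prop
  exact h_meas.stronglyMeasurable.integral_prod_right.measurable

theorem integrableOn_exp_neg_mul_cosh {x : ℝ} (hx : 0 < x) :
    IntegrableOn (fun v => exp (-x * cosh v)) (Ioi 0) := by
  refine (exp_neg_integrableOn_Ioi 0 hx).mono' (by fun_prop) ?_
  filter_upwards [ae_restrict_mem measurableSet_Ioi] with v hv
  have h_le : v ≤ cosh v := (self_le_sinh_iff.2 (le_of_lt hv)).trans (sinh_lt_cosh v).le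
  rw [norm_of_nonneg (exp_pos _).le]
  exact exp_le_exp.2 (mul_le_mul_of_nonpos_left h_le (neg_nonpos.2 hx.le))

theorem ofReal_besselKi_zero {x : ℝ} (hx : 0 < x) :
    ENNReal.ofReal (besselKi 0 x) = ∫⁻ v in Ioi 0, ENNReal.ofReal (exp (-x * cosh v)) := by
  rw [besselKi_zero_eq]
  exact ofReal_integral_eq_lintegral_ofReal (integrableOn_exp_neg_mul_cosh hx)
    (ae_of_all _ fun _ => (exp_pos _).le)

/-- The substitution `s x = √(t² + s²) sinh v` turns `√(t² + s²) cosh v` into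
`√(t² + (1 + x²) s²)`. -/
theorem ofReal_besselKi_zero_sqrt {c s t : ℝ} (hc : 0 < c) (hs : 0 < s) :
    ENNReal.ofReal (besselKi 0 (√(t ^ 2 + s ^ 2) * c)) =
      ∫⁻ x in Ioi 0, ENNReal.ofReal
        (s / √(t ^ 2 + (1 + x ^ 2) * s ^ 2) * exp (-c * √(t ^ 2 + (1 + x ^ 2) * s ^ 2))) := by
  set r := √(t ^ 2 + s ^ 2)
  have hr_pos : 0 < r := by positivity
  have hr_sq : r ^ 2 = t ^ 2 + s ^ 2 := sq_sqrt (by positivity)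
  conv_rhs => rw [lintegral_Ioi_eq_lintegral_comp_sinh (div_pos hr_pos hs)]
  rw [ofReal_besselKi_zero (by positivity)]
  refine lintegral_congr fun v => ?_
  have := cosh_pos v
  have h_sqrt : √(t ^ 2 + (1 + (r / s * sinh v) ^ 2) * s ^ 2) = r * cosh v := by
    rw [sqrt_eq_iff_eq_sq (by positivity) (by positivity), mul_pow r, cosh_sq v]
    field_simp
    linear_combination -hr_sq
  rw [h_sqrt, ← ENNReal.ofReal_mul (by positivity), neg_mul, neg_mul, mul_assoc,
    mul_left_comm c]
  congr 1
  field_simp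

theorem lintegral_mul_besselKi_zero_div_sqrt {c t : ℝ} (hc : 0 < c) (ht : 0 < t) :
    ∫⁻ y in Ioi t, ENNReal.ofReal (y * besselKi 0 (y * c) / √(y ^ 2 - t ^ 2)) =
      ENNReal.ofReal (π / (2 * c) * exp (-c * t)) := by
  have h_subst : ∀ s ∈ Ioi (0 : ℝ),
      ENNReal.ofReal (1 * s / √(t ^ 2 + 1 * s ^ 2)) * ENNReal.ofReal (√(t ^ 2 + 1 * s ^ 2) *
        besselKi 0 (√(t ^ 2 + 1 * s ^ 2) * c) / √(√(t ^ 2 + 1 * s ^ 2) ^ 2 - t ^ 2)) =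
      ENNReal.ofReal (besselKi 0 (√(t ^ 2 + s ^ 2) * c)) := fun s hs => by
    have hs_pos : 0 < s := hs
    rw [one_mul, one_mul, ← ENNReal.ofReal_mul (by positivity), sq_sqrt (by positivity),
      add_sub_cancel_left, sqrt_sq hs_pos.le]
    congr 1
    field_simp
  calc ∫⁻ y in Ioi t, ENNReal.ofReal (y * besselKi 0 (y * c) / √(y ^ 2 - t ^ 2))
      = ∫⁻ s in Ioi 0, ENNReal.ofReal (besselKi 0 (√(t ^ 2 + s ^ 2) * c)) := by
        rw [lintegral_Ioi_eq_lintegral_comp_sqrt one_pos ht,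
          setLIntegral_congr_fun measurableSet_Ioi h_subst]
    _ = ∫⁻ s in Ioi (0 : ℝ), ∫⁻ x in Ioi (0 : ℝ), ENNReal.ofReal
          (s / √(t ^ 2 + (1 + x ^ 2) * s ^ 2) * exp (-c * √(t ^ 2 + (1 + x ^ 2) * s ^ 2))) :=
        setLIntegral_congr_fun measurableSet_Ioi fun s hs => ofReal_besselKi_zero_sqrt hc hs
    _ = ∫⁻ x in Ioi (0 : ℝ), ∫⁻ s in Ioi (0 : ℝ), ENNReal.ofReal
          (s / √(t ^ 2 + (1 + x ^ 2) * s ^ 2) * exp (-c * √(t ^ 2 + (1 + x ^ 2) * s ^ 2))) :=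
        lintegral_lintegral_swap (by fun_prop)
    _ = ∫⁻ x in Ioi (0 : ℝ), ENNReal.ofReal (exp (-c * t) / c) * ENNReal.ofReal (1 + x ^ 2)⁻¹ :=
        lintegral_congr fun x => by
          rw [lintegral_exp_neg_mul_sqrt (by positivity) hc ht, ENNReal.ofReal_mul (by positivity)]
    _ = ENNReal.ofReal (π / (2 * c) * exp (-c * t)) := by
        rw [lintegral_const_mul _ (by fun_prop), lintegral_Ioi_inv_one_add_sq,
          ← ENNReal.ofReal_mul (by positivity)]
        congr 1
        field_simp

theorem mul_besselKi_zero_nonneg (c : ℝ) {y : ℝ} (hy : 0 ≤ y) : 0 ≤ y * besselKi 0 (y * c) :=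
  mul_nonneg hy (besselKi_zero_nonneg _)

theorem integrableOn_mul_besselKi_zero_div_sqrt {c t : ℝ} (hc : 0 < c) (ht : 0 < t) :
    IntegrableOn (fun y => y * besselKi 0 (y * c) / √(y ^ 2 - t ^ 2)) (Ioi t) := by
  have h_meas := measurable_besselKi 0
  rw [IntegrableOn, ← lintegral_ofReal_ne_top_iff_integrable
    (Measurable.aestronglyMeasurable (by fun_prop))
    (ae_restrict_of_forall_mem measurableSet_Ioi fun y hy =>
      div_nonneg (mul_besselKi_zero_nonneg c (ht.trans hy).le) (sqrt_nonneg _)),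
    lintegral_mul_besselKi_zero_div_sqrt hc ht]
  exact ENNReal.ofReal_ne_top

theorem abelAdjoint_mul_besselKi_zero {c t : ℝ} (hc : 0 < c) (ht : 0 < t) :
    abelAdjoint (fun y => y * besselKi 0 (y * c)) t = π / (2 * c) * exp (-c * t) := by
  have h_meas := measurable_besselKi 0
  rw [abelAdjoint, integral_eq_lintegral_of_nonneg_ae
    (ae_restrict_of_forall_mem measurableSet_Ioi fun y hy =>
      div_nonneg (mul_besselKi_zero_nonneg c (ht.trans hy).le) (sqrt_nonneg _))
    (Measurable.aestronglyMeasurable (by fun_prop)),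
    lintegral_mul_besselKi_zero_div_sqrt hc ht, ENNReal.toReal_ofReal (by positivity)]

/-! ### The Laplace transform of `K_{iτ}` -/

theorem one_add_half_sq_le_cosh (v : ℝ) : 1 + v ^ 2 / 2 ≤ cosh v := by
  have h_sq : (v / 2) ^ 2 ≤ sinh (v / 2) ^ 2 := by
    rw [sq_le_sq, abs_sinh]
    exact self_le_sinh_iff.2 (abs_nonneg _)
  have h_cosh : cosh v = 1 + 2 * sinh (v / 2) ^ 2 := by
    rw [← mul_div_cancel₀ v two_ne_zero, cosh_two_mul, cosh_sq, mul_div_cancel₀ v two_ne_zero]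
    ring
  linarith

theorem add_cosh_pos {c : ℝ} (hc : -1 < c) (v : ℝ) : 0 < c + cosh v := by
  linarith [one_le_cosh v]

theorem integrable_inv_add_cosh {c : ℝ} (hc : -1 < c) :
    Integrable fun v : ℝ => (c + cosh v)⁻¹ := by
  obtain ⟨m, hm, hmc, hm_half⟩ : ∃ m > 0, m ≤ 1 + c ∧ m ≤ 1 / 2 :=
    ⟨min (1 + c) (1 / 2), lt_min (by linarith) (by norm_num), min_le_left _ _, min_le_right _ _⟩
  refine (integrable_inv_one_add_sq.const_mul m⁻¹).mono'
    (Measurable.aestronglyMeasurable (by fun_prop)) (ae_of_all _ fun v => ?_)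
  rw [norm_of_nonneg (inv_pos.2 (add_cosh_pos hc v)).le, ← mul_inv]
  refine inv_anti₀ (by positivity) ?_
  nlinarith [one_add_half_sq_le_cosh v, sq_nonneg v]

theorem integrable_exp_neg_add_cosh_mul {c : ℝ} (hc : -1 < c) :
    Integrable (fun p : ℝ × ℝ => exp (-(c + cosh p.2) * p.1))
      ((volume.restrict (Ioi 0)).prod (volume.restrict (Ioi 0))) := by
  refine (integrable_prod_iff' (Measurable.aestronglyMeasurable (by fun_prop))).2
    ⟨ae_of_all _ fun v => exp_neg_integrableOn_Ioi 0 (add_cosh_pos hc v), ?_⟩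
  refine (integrable_inv_add_cosh hc).integrableOn.congr (ae_of_all _ fun v => ?_)
  simp only [norm_of_nonneg (exp_pos _).le]
  rw [integral_exp_mul_Ioi (neg_lt_zero.2 (add_cosh_pos hc v)), mul_zero, exp_zero,
    neg_div_neg_eq, one_div]

theorem integrable_cos_mul_exp_neg_add_cosh_mul (τ : ℝ) {c : ℝ} (hc : -1 < c) :
    Integrable (Function.uncurry fun t v : ℝ => cos (τ * v) * exp (-(c + cosh v) * t))
      ((volume.restrict (Ioi 0)).prod (volume.restrict (Ioi 0))) :=
  (integrable_exp_neg_add_cosh_mul hc).bdd_mul (c := 1)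
    (Measurable.aestronglyMeasurable (by fun_prop)) (ae_of_all _ fun p => abs_cos_le_one (τ * p.2))

theorem besselKi_mul_exp (τ c t : ℝ) :
    besselKi τ t * exp (-c * t) = ∫ v in Ioi 0, cos (τ * v) * exp (-(c + cosh v) * t) := by
  rw [besselKi, ← integral_mul_const]
  refine integral_congr_ae (ae_of_all _ fun v => ?_)
  dsimp only
  rw [show -(c + cosh v) * t = -t * cosh v + -c * t by ring, exp_add]
  ring

theorem integrableOn_besselKi_mul_exp (τ : ℝ) {c : ℝ} (hc : -1 < c) :
    IntegrableOn (fun t => besselKi τ t * exp (-c * t)) (Ioi 0) := by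
  simp only [besselKi_mul_exp]
  exact (integrable_cos_mul_exp_neg_add_cosh_mul τ hc).integral_prod_left

theorem integrableOn_besselKi (τ : ℝ) : IntegrableOn (besselKi τ) (Ioi 0) := by
  simpa using integrableOn_besselKi_mul_exp τ neg_one_lt_zero

theorem integral_besselKi_mul_exp (τ : ℝ) {c : ℝ} (hc : -1 < c) :
    ∫ t in Ioi 0, besselKi τ t * exp (-c * t) =
      ∫ v in Ioi 0, cos (τ * v) * (c + cosh v)⁻¹ := by
  simp only [besselKi_mul_exp]
  rw [integral_integral_swap (integrable_cos_mul_exp_neg_add_cosh_mul τ hc)]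
  refine integral_congr_ae (ae_of_all _ fun v => ?_)
  dsimp only
  rw [integral_const_mul, integral_exp_mul_Ioi (neg_lt_zero.2 (add_cosh_pos hc v)), mul_zero,
    exp_zero, neg_div_neg_eq, one_div]

/-! ### The cosine transform of `1 / (cosh u + cosh v)` -/

theorem betaIntegral_one_add_one_sub {z : ℂ} (hz : z ≠ 0) (hz_re : |z.re| < 1) :
    Complex.betaIntegral (1 + z) (1 - z) = π * z / Complex.sin (π * z) := by
  obtain ⟨h_lower, h_upper⟩ := abs_lt.1 hz_re
  have h_gamma := Complex.Gamma_mul_Gamma_eq_betaIntegral (s := 1 + z) (t := 1 - z)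
    (by simpa using neg_lt_iff_pos_add'.1 h_lower) (by simpa using h_upper)
  have h_two : Complex.Gamma 2 = 1 := by simp
  rw [add_add_sub_cancel, one_add_one_eq_two, h_two, one_mul] at h_gamma
  rw [← h_gamma, add_comm, Complex.Gamma_add_one z hz, mul_assoc, Complex.Gamma_mul_Gamma_one_sub]
  ring

theorem inv_one_add_cosh_eq_sigmoid (v : ℝ) :
    (1 + cosh v)⁻¹ = 2 * (sigmoid v * (1 - sigmoid v)) := by
  rw [← sigmoid_neg, sigmoid_def, sigmoid_def, cosh_eq, neg_neg, exp_neg]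
  field_simp
  ring

theorem sigmoid_cpow_mul_one_sub_sigmoid_cpow_neg (z : ℂ) (v : ℝ) :
    (sigmoid v : ℂ) ^ z * (1 - sigmoid v : ℂ) ^ (-z) = Complex.exp (z * v) := by
  have h_pos := sigmoid_pos v
  have h_pos' := sigmoid_pos (-v)
  have h_log : log (sigmoid (-v)) = log (sigmoid v) - v := by
    rw [← sigmoid_mul_rexp_neg, log_mul h_pos.ne' (exp_pos _).ne', log_exp, sub_eq_add_neg]
  rw [← Complex.ofReal_one, ← Complex.ofReal_sub, ← sigmoid_neg,
    Complex.cpow_def_of_ne_zero (by exact_mod_cast h_pos.ne'),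
    Complex.cpow_def_of_ne_zero (by exact_mod_cast h_pos'.ne'), ← Complex.exp_add,
    ← Complex.ofReal_log h_pos.le, ← Complex.ofReal_log h_pos'.le, h_log]
  push_cast
  ring_nf

/-- The logistic substitution `p = 1 / (1 + e⁻ᵛ)` turns the integral into `2 B(1 + z, 1 - z)`. -/
theorem integral_cexp_mul_inv_one_add_cosh {z : ℂ} (hz : z ≠ 0) (hz_re : |z.re| < 1) :
    ∫ v : ℝ, Complex.exp (z * v) * ((1 + cosh v)⁻¹ : ℝ) = 2 * (π * z) / Complex.sin (π * z) := by
  have h_subst := integral_image_eq_integral_abs_deriv_smul MeasurableSet.univ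
    (fun v _ => (hasDerivAt_sigmoid v).hasDerivWithinAt) sigmoid_injective.injOn
    (fun p : ℝ => (p : ℂ) ^ z * (1 - p : ℂ) ^ (-z))
  rw [image_univ, range_sigmoid, setIntegral_univ] at h_subst
  calc ∫ v : ℝ, Complex.exp (z * v) * ((1 + cosh v)⁻¹ : ℝ)
      = ∫ v : ℝ, 2 * (|sigmoid v * (1 - sigmoid v)| •
          ((sigmoid v : ℂ) ^ z * (1 - sigmoid v : ℂ) ^ (-z))) := by
        refine integral_congr_ae (ae_of_all _ fun v => ?_)
        dsimp only
        rw [sigmoid_cpow_mul_one_sub_sigmoid_cpow_neg, inv_one_add_cosh_eq_sigmoid,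
          abs_of_nonneg (mul_nonneg (sigmoid_nonneg v) (sub_nonneg.2 (sigmoid_le_one v))),
          Complex.real_smul]
        push_cast
        ring
    _ = 2 * ∫ p in Ioo (0 : ℝ) 1, (p : ℂ) ^ z * (1 - p : ℂ) ^ (-z) := by
        rw [integral_const_mul, h_subst]
    _ = 2 * Complex.betaIntegral (1 + z) (1 - z) := by
        rw [Complex.betaIntegral, intervalIntegral.integral_of_le zero_le_one,
          integral_Ioc_eq_integral_Ioo, add_sub_cancel_left, sub_sub_cancel_left]
    _ = 2 * (π * z) / Complex.sin (π * z) := by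
        rw [betaIntegral_one_add_one_sub hz hz_re, mul_div_assoc']

theorem integral_cexp_mul_I_mul_inv_one_add_cosh_add {τ : ℝ} (hτ : τ ≠ 0) (q : ℝ) :
    ∫ v : ℝ, Complex.exp (τ * v * Complex.I) * ((1 + cosh (q + v))⁻¹ : ℝ) =
      Complex.exp (-(τ * q) * Complex.I) * (2 * π * τ / sinh (π * τ) : ℝ) := by
  have h_fourier := integral_cexp_mul_inv_one_add_cosh (z := τ * Complex.I)
    (by simpa using hτ) (by simp)
  calc ∫ v : ℝ, Complex.exp (τ * v * Complex.I) * ((1 + cosh (q + v))⁻¹ : ℝ)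
      = ∫ v : ℝ, Complex.exp (-(τ * q) * Complex.I) *
          (Complex.exp (τ * Complex.I * v) * ((1 + cosh v)⁻¹ : ℝ)) := by
        rw [← integral_add_left_eq_self (fun v : ℝ => Complex.exp (-(τ * q) * Complex.I) *
          (Complex.exp (τ * Complex.I * v) * ((1 + cosh v)⁻¹ : ℝ))) q]
        refine integral_congr_ae (ae_of_all _ fun v => ?_)
        dsimp only
        rw [← mul_assoc, ← Complex.exp_add]
        push_cast
        ring_nf
    _ = Complex.exp (-(τ * q) * Complex.I) * (2 * π * τ / sinh (π * τ) : ℝ) := by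
        rw [integral_const_mul, h_fourier, ← mul_assoc (π : ℂ), Complex.sin_mul_I]
        push_cast
        field_simp

theorem integral_cos_mul_inv_one_add_cosh_add {τ : ℝ} (hτ : τ ≠ 0) (q : ℝ) :
    ∫ v : ℝ, cos (τ * v) * (1 + cosh (q + v))⁻¹ = cos (τ * q) * (2 * π * τ / sinh (π * τ)) := by
  have h_re (x r : ℝ) : (Complex.exp (τ * x * Complex.I) * r).re = cos (τ * x) * r := by
    rw [Complex.re_mul_ofReal, ← Complex.ofReal_mul, Complex.exp_ofReal_mul_I_re]
  have h_int : Integrable fun v : ℝ =>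
      Complex.exp (τ * v * Complex.I) * ((1 + cosh (q + v))⁻¹ : ℝ) :=
    ((integrable_inv_add_cosh (by norm_num)).comp_add_left q).ofReal.bdd_mul (c := 1)
      (Measurable.aestronglyMeasurable (by fun_prop)) (ae_of_all _ fun v => by
        rw [← Complex.ofReal_mul, Complex.norm_exp_ofReal_mul_I])
  have h := congrArg Complex.re (integral_cexp_mul_I_mul_inv_one_add_cosh_add hτ q)
  rw [← mul_neg, ← Complex.ofReal_neg, h_re, mul_neg, cos_neg] at h
  rw [← h]
  exact (integral_congr_ae (ae_of_all _ fun v => (h_re v _).symm)).trans (integral_re h_int)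

theorem integral_inv_one_add_cosh_add (u v : ℝ) :
    ∫ q in (-u)..u, (1 + cosh (q + v))⁻¹ = 2 * sinh u * (cosh u + cosh v)⁻¹ := by
  have h_deriv (q : ℝ) : HasDerivAt (fun q => 2 * sigmoid (q + v)) (1 + cosh (q + v))⁻¹ q := by
    rw [inv_one_add_cosh_eq_sigmoid]
    exact ((hasDerivAt_sigmoid (q + v)).comp_add_const q v).const_mul 2
  have h_cont : Continuous fun q => (1 + cosh (q + v))⁻¹ :=
    Continuous.inv₀ (by fun_prop) fun q => (add_cosh_pos (by norm_num) _).ne'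
  rw [intervalIntegral.integral_eq_sub_of_hasDerivAt (fun q _ => h_deriv q)
    (h_cont.intervalIntegrable _ _)]
  simp only [sigmoid_def, sinh_eq, cosh_eq, neg_add, neg_neg, exp_add, exp_neg]
  field_simp
  ring

theorem integrable_cos_mul_inv_one_add_cosh_add (τ : ℝ) (μ : Measure ℝ) [IsFiniteMeasure μ] :
    Integrable (Function.uncurry fun q v : ℝ => cos (τ * v) * (1 + cosh (q + v))⁻¹)
      (μ.prod volume) :=
  ((measurePreserving_prod_add μ volume).integrable_comp_of_integrable
    ((integrable_inv_add_cosh (by norm_num)).comp_snd μ)).bdd_mul (c := 1)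
      (Measurable.aestronglyMeasurable (by fun_prop))
      (ae_of_all _ fun p => abs_cos_le_one (τ * p.2))

/-- By `integral_inv_one_add_cosh_add`, the integrand is, up to a factor, an integral over
`q ∈ [-u, u]` of translates of `1 / (1 + cosh v)`, whose transforms are known. -/
theorem sinh_mul_integral_cos_mul_inv_cosh_add_cosh {τ : ℝ} (hτ : τ ≠ 0) (u : ℝ) :
    sinh u * ∫ v : ℝ, cos (τ * v) * (cosh u + cosh v)⁻¹ = 2 * π * sin (τ * u) / sinh (π * τ) := by
  have h_double : 2 * (sinh u * ∫ v : ℝ, cos (τ * v) * (cosh u + cosh v)⁻¹) =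
      2 * (2 * π * sin (τ * u) / sinh (π * τ)) :=
    calc 2 * (sinh u * ∫ v : ℝ, cos (τ * v) * (cosh u + cosh v)⁻¹)
        = ∫ v : ℝ, ∫ q in (-u)..u, cos (τ * v) * (1 + cosh (q + v))⁻¹ := by
          simp only [intervalIntegral.integral_const_mul, integral_inv_one_add_cosh_add,
            mul_left_comm _ (2 * sinh u)]
          rw [integral_const_mul, mul_assoc]
      _ = ∫ q in (-u)..u, ∫ v : ℝ, cos (τ * v) * (1 + cosh (q + v))⁻¹ :=
          (intervalIntegral_integral_swap
            (have : IsFiniteMeasure (volume.restrict (uIoc (-u) u)) := ⟨by simp [uIoc]⟩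
            integrable_cos_mul_inv_one_add_cosh_add τ _)).symm
      _ = 2 * (2 * π * sin (τ * u) / sinh (π * τ)) := by
          simp only [integral_cos_mul_inv_one_add_cosh_add hτ, intervalIntegral.integral_mul_const,
            intervalIntegral.integral_comp_mul_left _ hτ, integral_cos, mul_neg, sin_neg,
            smul_eq_mul]
          field_simp
          ring
  exact mul_left_cancel₀ two_ne_zero h_double

theorem sinh_mul_integral_Ioi_cos_mul_inv_cosh_add_cosh {τ : ℝ} (hτ : τ ≠ 0) (u : ℝ) :
    sinh u * ∫ v in Ioi 0, cos (τ * v) * (cosh u + cosh v)⁻¹ = π * sin (τ * u) / sinh (π * τ) := by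
  have h_even : ∫ v : ℝ, cos (τ * v) * (cosh u + cosh v)⁻¹ =
      2 * ∫ v in Ioi 0, cos (τ * v) * (cosh u + cosh v)⁻¹ := by
    rw [← integral_comp_abs (f := fun v => cos (τ * v) * (cosh u + cosh v)⁻¹)]
    refine integral_congr_ae (ae_of_all _ fun v => ?_)
    dsimp only
    rw [cosh_abs, ← cos_abs (τ * v), ← cos_abs (τ * |v|), abs_mul, abs_mul, abs_abs]
  have h := sinh_mul_integral_cos_mul_inv_cosh_add_cosh hτ u
  rw [h_even] at h
  linear_combination h / 2

theorem integral_besselKi_mul_exp_neg_cosh {τ u : ℝ} (hτ : τ ≠ 0) (hu : u ≠ 0) :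
    ∫ t in Ioi 0, besselKi τ t * exp (-cosh u * t) =
      π / sinh (π * τ) * (sin (τ * u) / sinh u) := by
  have h_sinh : sinh u ≠ 0 := sinh_ne_zero.2 hu
  rw [integral_besselKi_mul_exp τ (neg_one_lt_zero.trans (cosh_pos u))]
  refine mul_left_cancel₀ h_sinh ?_
  rw [sinh_mul_integral_Ioi_cos_mul_inv_cosh_add_cosh hτ]
  field_simp

/-! ### Superpositions of the functions `y ↦ y K₀(c y)` -/

section Superposition

variable {k : ℝ → ℝ}

theorem exp_neg_mul_le_one {c t : ℝ} (hc : 0 ≤ c) (ht : 0 ≤ t) : exp (-c * t) ≤ 1 :=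
  exp_le_one_iff.2 (mul_nonpos_of_nonpos_of_nonneg (neg_nonpos.2 hc) ht)

theorem integrableOn_mul_exp_neg_mul (hk : IntegrableOn k (Ioi 0)) {c : ℝ} (hc : 0 ≤ c) :
    IntegrableOn (fun t => k t * exp (-c * t)) (Ioi 0) := by
  refine hk.mul_bdd (c := 1) (Measurable.aestronglyMeasurable (by fun_prop)) ?_
  filter_upwards [ae_restrict_mem measurableSet_Ioi] with t ht
  rw [norm_of_nonneg (exp_pos _).le]
  exact exp_neg_mul_le_one hc (le_of_lt ht)

theorem mul_abelAdjoint_mul_besselKi_zero (k : ℝ → ℝ) {c t : ℝ} (hc : 0 < c) (ht : 0 < t) :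
    k t * abelAdjoint (fun y => y * besselKi 0 (y * c)) t =
      π / (2 * c) * (k t * exp (-c * t)) := by
  rw [abelAdjoint_mul_besselKi_zero hc ht, mul_left_comm]

theorem integrable_abelIntegrand_mul_besselKi_zero (hk : IntegrableOn k (Ioi 0)) {c : ℝ}
    (hc : 0 < c) :
    Integrable (Function.uncurry fun y t => abelIntegrand k y t * (y * besselKi 0 (y * c)))
      ((volume.restrict (Ioi 0)).prod (volume.restrict (Ioi 0))) := by
  have h_meas := measurable_besselKi 0
  refine integrable_abelIntegrand_mul (w := fun y => y * besselKi 0 (y * c))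
    hk.aestronglyMeasurable (fun y hy => mul_besselKi_zero_nonneg c hy.le)
    (Measurable.aestronglyMeasurable (by fun_prop))
    (fun t ht => integrableOn_mul_besselKi_zero_div_sqrt hc ht) ?_
  exact IntegrableOn.congr_fun ((integrableOn_mul_exp_neg_mul hk hc.le).const_mul _)
    (fun t ht => (mul_abelAdjoint_mul_besselKi_zero k hc ht).symm) measurableSet_Ioi

theorem integrableOn_abelTransform_mul_besselKi_zero (hk : IntegrableOn k (Ioi 0)) {c : ℝ}
    (hc : 0 < c) :
    IntegrableOn (fun y => abelTransform k y * (y * besselKi 0 (y * c))) (Ioi 0) :=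
  integrableOn_abelTransform_mul (w := fun y => y * besselKi 0 (y * c))
    (integrable_abelIntegrand_mul_besselKi_zero hk hc)

theorem integral_abelTransform_mul_besselKi_zero (hk : IntegrableOn k (Ioi 0)) {c : ℝ}
    (hc : 0 < c) :
    ∫ y in Ioi 0, abelTransform k y * (y * besselKi 0 (y * c)) =
      π / (2 * c) * ∫ t in Ioi 0, k t * exp (-c * t) := by
  rw [integral_abelTransform_mul (w := fun y => y * besselKi 0 (y * c))
      (integrable_abelIntegrand_mul_besselKi_zero hk hc),
    setIntegral_congr_fun measurableSet_Ioi fun t ht =>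
      mul_abelAdjoint_mul_besselKi_zero k hc ht, integral_const_mul]

theorem integral_norm_abelTransform_mul_besselKi_zero_le (hk : IntegrableOn k (Ioi 0)) {c : ℝ}
    (hc : 0 < c) :
    ∫ y in Ioi 0, ‖abelTransform k y * (y * besselKi 0 (y * c))‖ ≤
      π / (2 * c) * ∫ t in Ioi 0, ‖k t‖ := by
  refine (integral_norm_abelTransform_mul_le (w := fun y => y * besselKi 0 (y * c))
    (fun y hy => mul_besselKi_zero_nonneg c hy.le)
    (integrable_abelIntegrand_mul_besselKi_zero hk hc)).trans ?_
  rw [← integral_const_mul]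
  refine integral_mono_of_nonneg (ae_of_all _ fun _ => norm_nonneg _) (hk.norm.const_mul _) ?_
  filter_upwards [ae_restrict_mem measurableSet_Ioi] with t ht
  rw [mul_abelAdjoint_mul_besselKi_zero k hc ht, norm_mul, norm_mul,
    norm_of_nonneg (exp_pos _).le, norm_of_nonneg (by positivity : 0 ≤ π / (2 * c))]
  gcongr
  exact mul_le_of_le_one_right (norm_nonneg _) (exp_neg_mul_le_one hc.le (le_of_lt ht))

variable {α E : Type*} [MeasurableSpace α] {μ : Measure α} [SFinite μ]
  [NormedAddCommGroup E] [NormedSpace ℝ E] {c : α → ℝ} {φ : α → E}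

theorem integrable_abelTransform_mul_besselKi_zero_smul (hk : IntegrableOn k (Ioi 0))
    (hc : Measurable c) (hc_pos : ∀ u, 0 < c u) (hφ : Integrable φ μ) :
    Integrable (Function.uncurry fun y u =>
        (abelTransform k y * (y * besselKi 0 (y * c u)) * c u) • φ u)
      ((volume.restrict (Ioi 0)).prod μ) := by
  have h_meas := measurable_besselKi 0
  have h_aesm : AEStronglyMeasurable (Function.uncurry fun y u =>
      (abelTransform k y * (y * besselKi 0 (y * c u)) * c u) • φ u)
      ((volume.restrict (Ioi 0)).prod μ) := by
    have h_kernel : Measurable fun p : ℝ × α => p.1 * besselKi 0 (p.1 * c p.2) := by fun_prop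
    exact (((aestronglyMeasurable_abelTransform hk.aestronglyMeasurable).comp_fst.mul
      h_kernel.aestronglyMeasurable).mul (hc.comp measurable_snd).aestronglyMeasurable).smul
        hφ.1.comp_snd
  refine (integrable_prod_iff' h_aesm).2 ⟨ae_of_all _ fun u =>
    ((integrableOn_abelTransform_mul_besselKi_zero hk (hc_pos u)).mul_const (c u)).smul_const
      (φ u), ?_⟩
  refine (hφ.norm.const_mul (π / 2 * ∫ t in Ioi 0, ‖k t‖)).mono'
    h_aesm.norm.prod_swap.integral_prod_right' (ae_of_all _ fun u => ?_)
  have h_pos := hc_pos u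
  rw [norm_of_nonneg (by positivity)]
  simp only [Function.uncurry, norm_smul, norm_mul _ (c u), norm_of_nonneg h_pos.le,
    integral_mul_const]
  refine mul_le_mul_of_nonneg_right ?_ (norm_nonneg _)
  calc (∫ y in Ioi 0, ‖abelTransform k y * (y * besselKi 0 (y * c u))‖) * c u
      ≤ π / (2 * c u) * (∫ t in Ioi 0, ‖k t‖) * c u := mul_le_mul_of_nonneg_right
        (integral_norm_abelTransform_mul_besselKi_zero_le hk h_pos) h_pos.le
    _ = π / 2 * ∫ t in Ioi 0, ‖k t‖ := by field_simp

theorem integral_abelTransform_smul_integral_besselKi_zero [CompleteSpace E]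
    (hk : IntegrableOn k (Ioi 0)) (hc : Measurable c) (hc_pos : ∀ u, 0 < c u)
    (hφ : Integrable φ μ) :
    ∫ y in Ioi 0, abelTransform k y • (2 * y / π) • ∫ u, (besselKi 0 (y * c u) * c u) • φ u ∂μ =
      ∫ u, (∫ t in Ioi 0, k t * exp (-c u * t)) • φ u ∂μ :=
  calc ∫ y in Ioi 0, abelTransform k y • (2 * y / π) • ∫ u, (besselKi 0 (y * c u) * c u) • φ u ∂μ
      = ∫ y in Ioi 0, (2 / π) •
          ∫ u, (abelTransform k y * (y * besselKi 0 (y * c u)) * c u) • φ u ∂μ := by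
        have h_scalar (y : ℝ) (u : α) :
            abelTransform k y * (2 * y / π * (besselKi 0 (y * c u) * c u)) =
              2 / π * (abelTransform k y * (y * besselKi 0 (y * c u)) * c u) := by
          ring
        simp only [← integral_smul, smul_smul, h_scalar]
    _ = (2 / π) • ∫ u, (∫ y in Ioi 0, abelTransform k y * (y * besselKi 0 (y * c u)) * c u) •
          φ u ∂μ := by
        rw [integral_smul, integral_integral_swap
          (integrable_abelTransform_mul_besselKi_zero_smul hk hc hc_pos hφ)]
        simp only [integral_smul_const]
    _ = ∫ u, (∫ t in Ioi 0, k t * exp (-c u * t)) • φ u ∂μ := by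
        rw [← integral_smul]
        refine integral_congr_ae (ae_of_all _ fun u => ?_)
        have h_pos := hc_pos u
        dsimp only
        rw [smul_smul, integral_mul_const, integral_abelTransform_mul_besselKi_zero hk h_pos]
        congr 1
        field_simp

end Superposition

/-- At `u = 0` the quotient `sin (τ u) / sinh u` has the junk value `0 / 0 = 0`, not its limit
`τ`. -/
theorem lebedev_transform_eq_sine_coeff_general {E : Type*} [NormedAddCommGroup E]
    [NormedSpace ℝ E] [CompleteSpace E] {μ : Measure ℝ} [SFinite μ] (hμ : ∀ᵐ u ∂μ, u ≠ 0)
    {φ : ℝ → E} (hφ : Integrable φ μ) {τ : ℝ} (hτ : τ ≠ 0) :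
    ∫ y in Ioi 0, abelTransform (besselKi τ) y •
        (2 * y / π) • ∫ u, (besselKi 0 (y * cosh u) * cosh u) • φ u ∂μ =
      (π / sinh (π * τ)) • ∫ u, (sin (τ * u) / sinh u) • φ u ∂μ := by
  rw [integral_abelTransform_smul_integral_besselKi_zero (integrableOn_besselKi τ)
    measurable_cosh cosh_pos hφ, ← integral_smul]
  refine integral_congr_ae (hμ.mono fun u hu => ?_)
  dsimp only
  rw [integral_besselKi_mul_exp_neg_cosh hτ hu, mul_smul]

/-- Formula (2.7): `aₙ = (π/sinh(πn)) ∫_{−π}^{π} φ(u) sin(nu)/sinh(u) du`. -/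
theorem lebedev_transform_eq_sine_coeff
    (C : ℝ) (hC : 0 < C) (ψ : ℝ → ℂ)
    (hper : ∀ u : ℝ, ψ (u + 2 * π) = ψ u)
    (hlip : ∀ u ∈ Set.Icc (-π) π, ∀ v ∈ Set.Icc (-π) π, ‖ψ u - ψ v‖ ≤ C * |u - v|)
    (φ : ℝ → ℂ) (hφ : ∀ u : ℝ, φ u = ψ u * Real.sinh u)
    (f : ℝ → ℂ)
    (hf : ∀ x : ℝ, 0 < x → f x = ((2 * x / π : ℝ) : ℂ) *
      ∫ u in (-π)..π, ((besselKi 0 (x * Real.cosh u) : ℝ) : ℂ) * φ u * (Real.cosh u : ℂ))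
    (a : ℕ → ℂ)
    (ha : ∀ n : ℕ, a n = ∫ y in Set.Ioi (0 : ℝ), ((lebedevL n y : ℝ) : ℂ) * f y) :
    ∀ n : ℕ, 0 < n →
      a n = ((π / Real.sinh (π * n) : ℝ) : ℂ) *
        ∫ u in (-π)..π, φ u * ((Real.sin (n * u) / Real.sinh u : ℝ) : ℂ) := by
  intro n hn
  have h_cont : ContinuousOn φ (Icc (-π) π) := by
    have h_psi : ContinuousOn ψ (Icc (-π) π) := (LipschitzOnWith.of_dist_le' fun u hu v hv => by
      simpa only [dist_eq_norm, norm_eq_abs] using hlip u hu v hv).continuousOn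
    rw [funext hφ]
    exact h_psi.mul (by fun_prop)
  have h_int : IntegrableOn φ (Ioc (-π) π) := h_cont.integrableOn_Icc.mono_set Ioc_subset_Icc_self
  have h_general := lebedev_transform_eq_sine_coeff_general
    (ae_restrict_of_ae (Measure.ae_ne volume 0)) h_int (Nat.cast_ne_zero.2 hn.ne')
  simp only [Complex.real_smul, ← intervalIntegral.integral_of_le (neg_le_self pi_pos.le)]
    at h_general
  simp only [ha, mul_comm (φ _), ← h_general]
  refine setIntegral_congr_fun measurableSet_Ioi fun y hy => ?_
  simp only [lebedevL_eq_abelTransform, hf y hy, mul_right_comm _ (φ _), Complex.ofReal_mul]
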